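/- Let c satisfy [H1] and [H2], let k ∈ ℂ with Im k ≥ 0, and let u₁ be the Jost solution from +∞ at k. Define w(x,k) = u₁'(x)/(i k u₁(x)) for k ≠ 0 and w(x,0) = 1, and r(x,k) = (1 − w(x,k))/(1 + w(x,k)). Then: (i) |r(x,k)| < 1 for every x ∈ ℝ; (ii) r(·,k) is bounded and Lipschitz on ℝ, satisfies r'(x,k) = −2ik r(x,k) + (i k q(x)/2)(1 + r(x,k))² for a.e. x ∈ ℝ, and r(x,k) → 0 as x → +∞; (iii) if moreover k is real with k ≠ 0, and T(k), R₂(k) are scattering coefficients, i.e., T(k) ≠ 0 and u₁(·,k) = (R₂(k)/T(k)) u₂(·,k) + (1/T(k)) conj(u₂(·,k)) where u₂ is the Jost solution from −∞ at k, then e^{2ikx} r(x,k) → R₂(k) as x → −∞. -/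

import Mathlib

open MeasureTheory Filter Topology

noncomputable section

/-- Hypothesis [H1]: `c` is essentially bounded below away from `0` and bounded above. -/
def HypH1 (c : ℝ → ℝ) : Prop :=
  ∃ c₀ > (0 : ℝ), ∃ cM > (0 : ℝ), ∀ᵐ x : ℝ, c₀ < c x ∧ c x ≤ cM

/-- Hypothesis [H1] with explicit constants `c₀`, `cM`. -/
def HypH1c (c : ℝ → ℝ) (c₀ cM : ℝ) : Prop :=
  0 < c₀ ∧ 0 < cM ∧ ∀ᵐ x : ℝ, c₀ < c x ∧ c x ≤ cM

/-- Hypothesis [H2]: `|c(x) - 1| ≤ C ⟨x⟩^{-1-δ}` almost everywhere. -/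
def HypH2 (c : ℝ → ℝ) : Prop :=
  ∃ C > (0 : ℝ), ∃ δ > (0 : ℝ),
    ∀ᵐ x : ℝ, |c x - 1| ≤ C * (1 + x ^ 2) ^ (-(1 + δ) / 2)

/-- `u` is continuously differentiable, its derivative is locally absolutely continuous,
and `u'' + (k²/c²) u = 0` holds almost everywhere (equivalently, the integral formulation
of the second-order equation holds). -/
def SolvesHelmholtz (c : ℝ → ℝ) (k : ℂ) (u : ℝ → ℂ) : Prop :=
  ContDiff ℝ 1 u ∧
  ∀ a b : ℝ, deriv u b = deriv u a + ∫ x in a..b, -(k ^ 2 / ((c x : ℂ) ^ 2)) * u x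

/-- The Jost solution from `+∞` at `k` : `e^{-ikx} u(x) → 1` as `x → +∞`. -/
def IsJostPlus (c : ℝ → ℝ) (k : ℂ) (u : ℝ → ℂ) : Prop :=
  SolvesHelmholtz c k u ∧
  Tendsto (fun x : ℝ => Complex.exp (-(Complex.I * k * (x : ℂ))) * u x) atTop (𝓝 1)

/-- The Jost solution from `-∞` at `k` : `e^{ikx} u(x) → 1` as `x → -∞`. -/
def IsJostMinus (c : ℝ → ℝ) (k : ℂ) (u : ℝ → ℂ) : Prop :=
  SolvesHelmholtz c k u ∧
  Tendsto (fun x : ℝ => Complex.exp (Complex.I * k * (x : ℂ)) * u x) atBot (𝓝 1)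

/-- `q = 1 - 1/c²`. -/
def qfun (c : ℝ → ℝ) (x : ℝ) : ℝ := 1 - 1 / (c x) ^ 2

/-- `Q = 1 - 1/c`. -/
def Qfun (c : ℝ → ℝ) (x : ℝ) : ℝ := 1 - 1 / c x

/-- `w(x,k) = u₁'(x)/(ik u₁(x))` for `k ≠ 0`, and `w(x,0) = 1`. -/
def wJost (k : ℂ) (u : ℝ → ℂ) (x : ℝ) : ℂ :=
  if k = 0 then 1 else deriv u x / (Complex.I * k * u x)

/-- `r(x,k) = (1 - w(x,k))/(1 + w(x,k))`. -/
def rJost (k : ℂ) (u : ℝ → ℂ) (x : ℝ) : ℂ :=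
  (1 - wJost k u x) / (1 + wJost k u x)

/-!
Write `A₊ = e^{-ikx} (iku + u')` and `A₋ = e^{ikx} (iku - u')`, so that `e^{2ikx} r = A₋ / A₊`.
For the Jost solution from `+∞`, `m = e^{-ikx} u` tends to `1` and `A₊' = k² q m` is bounded near
`+∞`, so `m' = A₊ - 2ik m` is uniformly continuous there. Barbalat's lemma gives `m' → 0`, that is
`A₊ → 2ik`, and therefore `r = (2ik m - A₊) / A₊ → 0`.

The flux `Re (conj (iku) u')` is nonincreasing when `0 ≤ Im k`, and four times it is
`|iku + u'|² - |iku - u'|²`, which is positive near `+∞`. Hence it is positive everywhere, which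
says that `|r| < 1`. The Lipschitz bound then follows from the Riccati equation.

Under `x ↦ -x` the asymptotics at `+∞` become those of the Jost solution `u₂` from `-∞`:
`A₋ → 2ik`, and `A₊ → 0` for real `k`. Since conjugation exchanges the two amplitudes up to a sign,
the scattering relation yields `A₋ / A₊ → R₂` at `-∞` for `u₁`.
-/

section AbsoluteContinuity

open scoped NNReal

variable {X Y E : Type*} [PseudoMetricSpace X] [PseudoMetricSpace Y]
  [NormedAddCommGroup E] {a b : ℝ}

lemma absolutelyContinuousOnInterval_of_dist_le_mul {f : ℝ → X} {g : ℝ → Y} {K : ℝ}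
    (hf : AbsolutelyContinuousOnInterval f a b)
    (h : ∀ x ∈ Set.uIcc a b, ∀ y ∈ Set.uIcc a b, dist (g x) (g y) ≤ K * dist (f x) (f y)) :
    AbsolutelyContinuousOnInterval g a b := by
  refine squeeze_zero' (.of_forall fun _ ↦ Finset.sum_nonneg fun _ _ ↦ dist_nonneg) ?_
    (by simpa using Tendsto.const_mul K hf)
  rw [eventually_inf_principal]
  refine .of_forall fun I hI ↦ ?_
  rw [Finset.mul_sum]
  exact Finset.sum_le_sum fun i hi ↦ h _ (hI.1 i hi).1 _ (hI.1 i hi).2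

lemma absolutelyContinuousOnInterval_norm {f : ℝ → E}
    (hf : AbsolutelyContinuousOnInterval f a b) :
    AbsolutelyContinuousOnInterval (fun x ↦ ‖f x‖) a b :=
  absolutelyContinuousOnInterval_of_dist_le_mul (K := 1) hf fun x _ y _ ↦
    (dist_norm_norm_le _ _).trans_eq (by rw [one_mul, dist_eq_norm])

lemma absolutelyContinuousOnInterval_inv₀ {𝕜 : Type*} [NormedDivisionRing 𝕜] {f : ℝ → 𝕜}
    (hf : AbsolutelyContinuousOnInterval f a b) (h0 : ∀ x ∈ Set.uIcc a b, f x ≠ 0) :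
    AbsolutelyContinuousOnInterval (fun x ↦ (f x)⁻¹) a b := by
  obtain ⟨C, hC⟩ := isCompact_uIcc.exists_bound_of_continuousOn (hf.continuousOn.inv₀ h0)
  refine absolutelyContinuousOnInterval_of_dist_le_mul (K := C * C) hf fun x hx y hy ↦ ?_
  have hx' : ‖f x‖⁻¹ ≤ C := norm_inv (f x) ▸ hC x hx
  have hy' : ‖f y‖⁻¹ ≤ C := norm_inv (f y) ▸ hC y hy
  rw [dist_inv_inv₀ (h0 x hx) (h0 y hy), div_eq_inv_mul, mul_inv]
  have hC0 : 0 ≤ C := (by positivity : 0 ≤ ‖f x‖⁻¹).trans hx'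
  gcongr

lemma absolutelyContinuousOnInterval_mul {R : Type*} [SeminormedRing R] [NormMulClass R]
    {f g : ℝ → R}
    (hf : AbsolutelyContinuousOnInterval f a b) (hg : AbsolutelyContinuousOnInterval g a b) :
    AbsolutelyContinuousOnInterval (fun x ↦ f x * g x) a b :=
  hf.fun_smul hg

lemma absolutelyContinuousOnInterval_inner [InnerProductSpace ℝ E] {f g : ℝ → E}
    (hf : AbsolutelyContinuousOnInterval f a b) (hg : AbsolutelyContinuousOnInterval g a b) :
    AbsolutelyContinuousOnInterval (fun x ↦ inner ℝ (f x) (g x)) a b := by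
  have hadd := absolutelyContinuousOnInterval_norm (hf.fun_add hg)
  have hsub := absolutelyContinuousOnInterval_norm (hf.fun_sub hg)
  convert ((hadd.fun_mul hadd).fun_sub (hsub.fun_mul hsub)).const_mul (1 / 4) using 2 with x
  rw [← RCLike.re_to_real (x := inner ℝ (f x) (g x)),
    re_inner_eq_norm_add_mul_self_sub_norm_sub_mul_self_div_four]
  ring

lemma sub_le_mul_of_ae_deriv_le {f : ℝ → ℝ} {C : ℝ} (hab : a ≤ b)
    (hf : AbsolutelyContinuousOnInterval f a b)
    (hC : ∀ᵐ x, x ∈ Set.Icc a b → deriv f x ≤ C) : f b - f a ≤ C * (b - a) := by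
  calc f b - f a = ∫ x in a..b, deriv f x := hf.integral_deriv_eq_sub.symm
    _ ≤ ∫ _ in a..b, C :=
      intervalIntegral.integral_mono_ae_restrict hab hf.intervalIntegrable_deriv (by simp)
        ((ae_restrict_iff' measurableSet_Icc).2 hC)
    _ = C * (b - a) := by simp [mul_comm]

variable [NormedSpace ℝ E]

lemma absolutelyContinuousOnInterval_integral {f : ℝ → E}
    (hf : IntervalIntegrable f volume a b) :
    AbsolutelyContinuousOnInterval (fun x ↦ ∫ t in a..x, f t) a b := by
  refine absolutelyContinuousOnInterval_of_dist_le_mul (K := 1)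
    (hf.norm.absolutelyContinuousOnInterval_intervalIntegral Set.left_mem_uIcc)
    fun x hx y hy ↦ ?_
  have hsub {z} (hz : z ∈ Set.uIcc a b) : Set.uIcc a z ⊆ Set.uIcc a b :=
    Set.uIcc_subset_uIcc Set.left_mem_uIcc hz
  rw [one_mul, dist_eq_norm, Real.dist_eq,
    intervalIntegral.integral_interval_sub_left (hf.mono_set (hsub hx)) (hf.mono_set (hsub hy)),
    intervalIntegral.integral_interval_sub_left (hf.norm.mono_set (hsub hx))
      (hf.norm.mono_set (hsub hy))]
  exact intervalIntegral.norm_integral_le_abs_integral_norm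

lemma deriv_norm_sub_const_le {f : ℝ → E} {f' : E} {x : ℝ} (hf : HasDerivAt f f' x) (v : E) :
    deriv (fun t ↦ ‖f t - v‖) x ≤ ‖f'‖ := by
  by_cases hd : DifferentiableAt ℝ (fun t ↦ ‖f t - v‖) x
  · refine le_of_tendsto_of_tendsto hd.hasDerivAt.tendsto_slope hf.tendsto_slope.norm
      (.of_forall fun y ↦ (le_abs_self _).trans ?_)
    rw [← Real.norm_eq_abs, slope_def_module, norm_smul]
    simp only [slope_def_module, norm_smul]
    gcongr
    simpa using abs_norm_sub_norm_le (f y - v) (f x - v)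
  · rw [deriv_zero_of_not_differentiableAt hd]
    exact norm_nonneg f'

lemma lipschitzOnWith_of_ae_norm_deriv_le {f f' : ℝ → E} {s : Set ℝ} [hs : s.OrdConnected]
    {C : ℝ≥0} (hf : ∀ a b, AbsolutelyContinuousOnInterval f a b)
    (hf' : ∀ᵐ x, HasDerivAt f (f' x) x) (hC : ∀ᵐ x, x ∈ s → ‖f' x‖ ≤ C) :
    LipschitzOnWith C f s := by
  refine LipschitzOnWith.of_dist_le_mul fun x hx y hy ↦ ?_
  wlog hxy : x ≤ y generalizing x y
  · simpa only [dist_comm] using this y hy x hx (le_of_not_ge hxy)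
  have hconst : AbsolutelyContinuousOnInterval (fun _ ↦ f x) x y :=
    (contDiff_const (n := 1)).contDiffOn.absolutelyContinuousOnInterval
  have h := sub_le_mul_of_ae_deriv_le (C := C) hxy
    (absolutelyContinuousOnInterval_norm ((hf x y).fun_sub hconst)) <| by
      filter_upwards [hf', hC] with t ht htC hmem
      exact (deriv_norm_sub_const_le ht _).trans (htC (hs.out hx hy hmem))
  simpa [dist_eq_norm, norm_sub_rev, abs_of_nonneg (sub_nonneg.2 hxy), abs_sub_comm x y] using h

end AbsoluteContinuity

section Barbalat

variable {E : Type*} [NormedAddCommGroup E] {a : ℝ}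

lemma uniformContinuousOn_Ici_of_tendsto {f : ℝ → E} {L : E} (hf : ContinuousOn f (Set.Ici a))
    (hL : Tendsto f atTop (𝓝 L)) : UniformContinuousOn f (Set.Ici a) := by
  rw [uniformContinuousOn_iff_restrict]
  refine hf.domRestrict.uniformContinuous_of_tendsto_cocompact (x := L) ?_
  have hval : Tendsto ((↑) : Set.Ici a → ℝ) (cocompact (Set.Ici a)) atTop :=
    tendsto_atTop.2 fun b ↦ mem_cocompact.2 ⟨(↑) ⁻¹' Set.Icc a b,
      isClosed_Ici.isClosedEmbedding_subtypeVal.isCompact_preimage isCompact_Icc,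
      fun x hx ↦ le_of_not_ge fun hxb ↦ hx ⟨x.2, hxb⟩⟩
  exact hL.comp hval

variable [NormedSpace ℝ E]

theorem tendsto_deriv_zero_of_uniformContinuousOn {f f' : ℝ → E} {L : E}
    (hf : ∀ x ∈ Set.Ici a, HasDerivAt f (f' x) x) (hf' : UniformContinuousOn f' (Set.Ici a))
    (hL : Tendsto f atTop (𝓝 L)) : Tendsto f' atTop (𝓝 0) := by
  rw [Metric.tendsto_nhds]
  intro ε hε
  obtain ⟨δ, hδ, huc⟩ := Metric.uniformContinuousOn_iff_le.1 hf' (ε / 2) (half_pos hε)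
  have hincr : Tendsto (fun x ↦ f (x + δ) - f x) atTop (𝓝 0) := by
    simpa using (hL.comp (tendsto_atTop_add_const_right _ δ tendsto_id)).sub hL
  filter_upwards [eventually_ge_atTop a, hincr.norm.eventually_lt_const
    (by rw [norm_zero]; positivity : ‖(0 : E)‖ < ε / 2 * δ)] with x hx hsmall
  have htaylor : ‖f (x + δ) - (x + δ) • f' x - (f x - x • f' x)‖ ≤ ε / 2 * (x + δ - x) := by
    refine norm_image_sub_le_of_norm_deriv_le_segment' (f := fun t ↦ f t - t • f' x)
      (f' := fun t ↦ f' t - f' x) (fun t ht ↦ ?_) (fun t ht ↦ ?_) (x + δ) ⟨by linarith, le_rfl⟩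
    · simpa using ((hf t (le_trans hx ht.1)).fun_sub
        ((hasDerivAt_id t).smul_const (f' x))).hasDerivWithinAt
    · rw [← dist_eq_norm]
      refine huc t (le_trans hx ht.1) x hx ?_
      rw [Real.dist_eq, abs_of_nonneg (by linarith [ht.1])]
      linarith [ht.2]
  have hsplit : δ • f' x
      = f (x + δ) - f x - (f (x + δ) - (x + δ) • f' x - (f x - x • f' x)) := by
    rw [add_smul]; abel
  have hδf' : δ * ‖f' x‖ < δ * ε := by
    calc δ * ‖f' x‖ = ‖δ • f' x‖ := by rw [norm_smul, Real.norm_of_nonneg hδ.le]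
      _ ≤ ‖f (x + δ) - f x‖ + ε / 2 * (x + δ - x) := by
        rw [hsplit]; exact (norm_sub_le _ _).trans (by gcongr)
      _ < δ * ε := by linarith
  simpa using lt_of_mul_lt_mul_left hδf' hδ.le

end Barbalat

section Helmholtz

variable {c : ℝ → ℝ} {k : ℂ} {u v : ℝ → ℂ} {x c₀ M : ℝ}

lemma qfun_le_one (c : ℝ → ℝ) (x : ℝ) : qfun c x ≤ 1 :=
  sub_le_self 1 (by positivity)

lemma abs_qfun_le (hc₀ : 0 < c₀) (hc : c₀ ≤ |c x|) : |qfun c x| ≤ 1 + 1 / c₀ ^ 2 := by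
  calc |qfun c x| ≤ |1| + |1 / c x ^ 2| := abs_sub _ _
    _ = 1 + 1 / |c x| ^ 2 := by rw [abs_one, abs_div, abs_one, abs_pow]
    _ ≤ 1 + 1 / c₀ ^ 2 := by gcongr

lemma locallyIntegrable_qfun (hc : AEMeasurable c) (hM : ∀ᵐ x, |qfun c x| ≤ M) :
    LocallyIntegrable (qfun c) :=
  (locallyIntegrable_const M).mono
    (aemeasurable_const.sub (aemeasurable_const.div (hc.pow_const 2))).aestronglyMeasurable
    (hM.mono fun _ hx ↦ hx.trans (le_abs_self M))

lemma hasDerivAt_exp_neg_mul (z : ℂ) (x : ℝ) :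
    HasDerivAt (fun t : ℝ ↦ Complex.exp (-(z * t))) (-z * Complex.exp (-(z * x))) x := by
  simpa [mul_comm] using ((hasDerivAt_id (x : ℂ)).const_mul z).neg.cexp.comp_ofReal

lemma contDiff_exp_neg_mul (z : ℂ) : ContDiff ℝ 1 fun t : ℝ ↦ Complex.exp (-(z * t)) :=
  (contDiff_const.mul Complex.ofRealCLM.contDiff).neg.cexp

/-- The coefficient of `e^{ikx}` in the representation
`2ik u(x) = e^{ikx} A₊(x) + e^{-ikx} A₋(x)`, `u'(x) = (e^{ikx} A₊(x) - e^{-ikx} A₋(x)) / 2`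
given by variation of constants. -/
def rightAmplitude (k : ℂ) (u : ℝ → ℂ) (x : ℝ) : ℂ :=
  Complex.exp (-(Complex.I * k * x)) * (Complex.I * k * u x + deriv u x)

/-- The coefficient of `e^{-ikx}` in the same representation as for `rightAmplitude`. -/
def leftAmplitude (k : ℂ) (u : ℝ → ℂ) (x : ℝ) : ℂ :=
  Complex.exp (Complex.I * k * x) * (Complex.I * k * u x - deriv u x)

/-- The real part of `conj (ik u) u'`. For real `k` it is, up to a positive factor, the energy
flux in the direction of increasing `x` of the wave `e^{-ikt} u(x)`. -/
def energyFlux (k : ℂ) (u : ℝ → ℂ) (x : ℝ) : ℝ :=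
  inner ℝ (Complex.I * k * u x) (deriv u x)

lemma energyFlux_pos_iff :
    0 < energyFlux k u x ↔
      ‖Complex.I * k * u x - deriv u x‖ < ‖Complex.I * k * u x + deriv u x‖ := by
  rw [← sq_lt_sq₀ (norm_nonneg _) (norm_nonneg _), norm_sub_sq_real, norm_add_sq_real, energyFlux]
  constructor <;> intro h <;> linarith

lemma leftAmplitude_eq_rightAmplitude_comp_neg (k : ℂ) (u : ℝ → ℂ) (x : ℝ) :
    leftAmplitude k u x = rightAmplitude k (fun t ↦ u (-t)) (-x) := by
  simp [leftAmplitude, rightAmplitude, deriv_comp_neg, sub_eq_add_neg]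

section Linearity

variable (hu : DifferentiableAt ℝ u x) (hv : DifferentiableAt ℝ v x) (α β : ℂ)
include hu hv

lemma rightAmplitude_mul_add_mul :
    rightAmplitude k (fun t ↦ α * u t + β * v t) x
      = α * rightAmplitude k u x + β * rightAmplitude k v x := by
  simp only [rightAmplitude, deriv_fun_add (hu.const_mul α) (hv.const_mul β),
    deriv_const_mul_field]
  ring

lemma leftAmplitude_mul_add_mul :
    leftAmplitude k (fun t ↦ α * u t + β * v t) x
      = α * leftAmplitude k u x + β * leftAmplitude k v x := by
  simp only [leftAmplitude, deriv_fun_add (hu.const_mul α) (hv.const_mul β),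
    deriv_const_mul_field]
  ring

end Linearity

lemma rightAmplitude_conj (k : ℝ) (u : ℝ → ℂ) (x : ℝ) :
    rightAmplitude k (fun t ↦ (starRingEnd ℂ) (u t)) x
      = -(starRingEnd ℂ) (leftAmplitude k u x) := by
  simp only [rightAmplitude, leftAmplitude, starRingEnd_apply, deriv.star]
  simp only [RCLike.star_def, star_mul', ← Complex.exp_conj, map_mul, Complex.conj_I,
    Complex.conj_ofReal, neg_mul, star_sub]
  ring

lemma leftAmplitude_conj (k : ℝ) (u : ℝ → ℂ) (x : ℝ) :
    leftAmplitude k (fun t ↦ (starRingEnd ℂ) (u t)) x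
      = -(starRingEnd ℂ) (rightAmplitude k u x) := by
  simp only [rightAmplitude, leftAmplitude, starRingEnd_apply, deriv.star]
  simp only [RCLike.star_def, star_mul', ← Complex.exp_conj, map_neg, map_mul, Complex.conj_I,
    Complex.conj_ofReal, neg_mul, neg_neg, star_add]
  ring

namespace SolvesHelmholtz

lemma hasDerivAt (hu : SolvesHelmholtz c k u) (x : ℝ) : HasDerivAt u (deriv u x) x :=
  (hu.1.differentiable one_ne_zero x).hasDerivAt

lemma deriv_eq_add_integral (hu : SolvesHelmholtz c k u) (a b : ℝ) :
    deriv u b = deriv u a + ∫ x in a..b, k ^ 2 * ((qfun c x : ℂ) - 1) * u x := by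
  rw [hu.2 a b]
  congr 2 with x
  simp only [qfun]
  push_cast
  ring

lemma comp_neg (hu : SolvesHelmholtz c k u) :
    SolvesHelmholtz (fun x ↦ c (-x)) k (fun x ↦ u (-x)) := by
  refine ⟨hu.1.comp contDiff_neg, fun a b ↦ ?_⟩
  have h := hu.2 (-a) (-b)
  rw [deriv_comp_neg, deriv_comp_neg, h,
    intervalIntegral.integral_comp_neg (fun x ↦ -(k ^ 2 / ((c x : ℂ) ^ 2)) * u x),
    intervalIntegral.integral_symm]
  ring

section LocallyIntegrable

variable (hu : SolvesHelmholtz c k u) (hq : LocallyIntegrable (qfun c))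
include hu hq

lemma locallyIntegrable_rhs :
    LocallyIntegrable (fun x ↦ k ^ 2 * ((qfun c x : ℂ) - 1) * u x) := by
  convert (hq.sub (locallyIntegrable_const 1)).smul_continuous
    (g := fun x ↦ k ^ 2 * u x) (continuous_const.mul hu.1.continuous) using 2 with x
  rw [Pi.sub_apply, Complex.real_smul]
  push_cast
  ring

lemma ae_hasDerivAt_deriv :
    ∀ᵐ x, HasDerivAt (deriv u) (k ^ 2 * ((qfun c x : ℂ) - 1) * u x) x := by
  rw [funext (hu.deriv_eq_add_integral 0)]
  filter_upwards [_root_.LocallyIntegrable.ae_hasDerivAt_integral (hu.locallyIntegrable_rhs hq)]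
    with x hx
  exact (hx 0).const_add _

lemma absolutelyContinuousOnInterval_deriv (a b : ℝ) :
    AbsolutelyContinuousOnInterval (deriv u) a b := by
  rw [funext (hu.deriv_eq_add_integral a)]
  exact contDiff_const.contDiffOn.absolutelyContinuousOnInterval.fun_add
    (absolutelyContinuousOnInterval_integral
      ((hu.locallyIntegrable_rhs hq).integrableOn_isCompact isCompact_uIcc).intervalIntegrable)

lemma absolutelyContinuousOnInterval_mul_add_deriv (a b : ℝ) :
    AbsolutelyContinuousOnInterval (fun x ↦ Complex.I * k * u x + deriv u x) a b :=
  (contDiff_const.mul hu.1).contDiffOn.absolutelyContinuousOnInterval.fun_add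
    (hu.absolutelyContinuousOnInterval_deriv hq a b)

lemma ae_hasDerivAt_rightAmplitude :
    ∀ᵐ x, HasDerivAt (rightAmplitude k u)
      (k ^ 2 * qfun c x * (Complex.exp (-(Complex.I * k * x)) * u x)) x := by
  filter_upwards [hu.ae_hasDerivAt_deriv hq] with x hx
  refine ((hasDerivAt_exp_neg_mul _ x).mul (((hu.hasDerivAt x).const_mul
    (Complex.I * k)).add hx)).congr_deriv ?_
  simp only [Pi.add_apply]
  linear_combination (-k ^ 2 * Complex.exp (-(Complex.I * k * x)) * u x) * Complex.I_sq

lemma absolutelyContinuousOnInterval_rightAmplitude (a b : ℝ) :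
    AbsolutelyContinuousOnInterval (rightAmplitude k u) a b :=
  absolutelyContinuousOnInterval_mul
    (contDiff_exp_neg_mul _).contDiffOn.absolutelyContinuousOnInterval
    (hu.absolutelyContinuousOnInterval_mul_add_deriv hq a b)

lemma antitone_energyFlux (hk : 0 ≤ k.im) : Antitone (energyFlux k u) := by
  intro a b hab
  have hac : AbsolutelyContinuousOnInterval (energyFlux k u) a b :=
    absolutelyContinuousOnInterval_inner
      (contDiff_const.mul hu.1).contDiffOn.absolutelyContinuousOnInterval
      (hu.absolutelyContinuousOnInterval_deriv hq a b)
  have hle : ∀ᵐ x, x ∈ Set.Icc a b → deriv (energyFlux k u) x ≤ 0 := by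
    filter_upwards [hu.ae_hasDerivAt_deriv hq] with x hx _
    have hderiv : deriv (energyFlux k u) x
        = -(k.im * (‖k‖ ^ 2 * (1 - qfun c x) * ‖u x‖ ^ 2 + ‖deriv u x‖ ^ 2)) := by
      refine (((hu.hasDerivAt x).const_mul (Complex.I * k)).inner ℝ hx).deriv.trans ?_
      rw [Complex.sq_norm, Complex.sq_norm, Complex.sq_norm]
      simp [Complex.inner, Complex.normSq_apply, pow_two]
      ring
    have hq1 := sub_nonneg.2 (qfun_le_one c x)
    rw [hderiv, neg_nonpos]
    positivity
  simpa using sub_le_mul_of_ae_deriv_le hab hac hle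

end LocallyIntegrable

end SolvesHelmholtz

namespace IsJostPlus

variable (hu : IsJostPlus c k u) (hq : LocallyIntegrable (qfun c))
  (hM : ∀ᵐ x, |qfun c x| ≤ M)
include hu hq hM

lemma exists_lipschitzOnWith_rightAmplitude :
    ∃ X K, LipschitzOnWith K (rightAmplitude k u) (Set.Ici X) := by
  obtain ⟨X, hX⟩ := eventually_atTop.1 (hu.2.norm.eventually_le_const (u := 2) (by simp))
  refine ⟨X, (‖k‖ ^ 2 * M * 2).toNNReal, lipschitzOnWith_of_ae_norm_deriv_le
    (hu.1.absolutelyContinuousOnInterval_rightAmplitude hq)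
    (hu.1.ae_hasDerivAt_rightAmplitude hq) ?_⟩
  filter_upwards [hM] with x hxM hxX
  rw [norm_mul, norm_mul, norm_pow, Complex.norm_real, Real.norm_eq_abs]
  refine le_trans ?_ (Real.le_coe_toNNReal _)
  have hM0 : 0 ≤ M := (abs_nonneg _).trans hxM
  gcongr
  exact hX x hxX

theorem tendsto_rightAmplitude :
    Tendsto (rightAmplitude k u) atTop (𝓝 (2 * Complex.I * k)) := by
  obtain ⟨X, K, hlip⟩ := hu.exists_lipschitzOnWith_rightAmplitude hq hM
  let m : ℝ → ℂ := fun x ↦ Complex.exp (-(Complex.I * k * x)) * u x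
  have hm (x : ℝ) : HasDerivAt m (rightAmplitude k u x - 2 * Complex.I * k * m x) x := by
    refine ((hasDerivAt_exp_neg_mul _ x).mul (hu.1.hasDerivAt x)).congr_deriv ?_
    simp only [rightAmplitude, m]
    ring
  have hcm : Tendsto (fun x ↦ 2 * Complex.I * k * m x) atTop (𝓝 (2 * Complex.I * k)) := by
    simpa only [mul_one] using hu.2.const_mul (2 * Complex.I * k)
  have hcont : Continuous fun x ↦ 2 * Complex.I * k * m x :=
    continuous_const.mul (continuous_iff_continuousAt.2 fun x ↦ (hm x).continuousAt)
  have hderiv := tendsto_deriv_zero_of_uniformContinuousOn (fun x _ ↦ hm x)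
    (uniformContinuousOn_iff_restrict.2
      ((uniformContinuousOn_iff_restrict.1 hlip.uniformContinuousOn).sub
        (uniformContinuousOn_iff_restrict.1
          (uniformContinuousOn_Ici_of_tendsto hcont.continuousOn hcm)))) hu.2
  simpa using hderiv.add hcm

theorem energyFlux_pos (hk : 0 ≤ k.im) (hk0 : k ≠ 0) (x : ℝ) : 0 < energyFlux k u x := by
  have hadd := hu.tendsto_rightAmplitude hq hM
  have hsub : Tendsto (fun x : ℝ ↦ Complex.exp (-(Complex.I * k * x)) *
      (Complex.I * k * u x - deriv u x)) atTop (𝓝 0) := by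
    convert (hu.2.const_mul (2 * Complex.I * k)).sub hadd using 2 with x
    · simp only [rightAmplitude]; ring
    · ring
  have hlt : ‖(0 : ℂ)‖ < ‖2 * Complex.I * k‖ := by simpa using hk0
  obtain ⟨y, hy, hxy⟩ :=
    ((hsub.norm.eventually_lt hadd.norm hlt).and (eventually_ge_atTop x)).exists
  rw [rightAmplitude, norm_mul, norm_mul] at hy
  exact (energyFlux_pos_iff.2 (lt_of_mul_lt_mul_left hy (norm_nonneg _))).trans_le
    (hu.1.antitone_energyFlux hq hk hxy)

end IsJostPlus

namespace IsJostMinus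

lemma comp_neg (hu : IsJostMinus c k u) :
    IsJostPlus (fun x ↦ c (-x)) k (fun x ↦ u (-x)) :=
  ⟨hu.1.comp_neg, by simpa [Function.comp_def] using hu.2.comp tendsto_neg_atTop_atBot⟩

variable (hq : LocallyIntegrable (qfun c)) (hM : ∀ᵐ x, |qfun c x| ≤ M)
include hq hM

theorem tendsto_leftAmplitude (hu : IsJostMinus c k u) :
    Tendsto (leftAmplitude k u) atBot (𝓝 (2 * Complex.I * k)) := by
  have hneg := Measure.measurePreserving_neg (volume : Measure ℝ)
  have hq' : LocallyIntegrable (qfun c ∘ Homeomorph.neg ℝ) := by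
    refine (locallyIntegrable_map_homeomorph _).1 ?_
    rwa [Homeomorph.coe_neg, hneg.map_eq]
  rw [funext (leftAmplitude_eq_rightAmplitude_comp_neg k u)]
  exact (hu.comp_neg.tendsto_rightAmplitude hq' (hneg.quasiMeasurePreserving.ae hM)).comp
    tendsto_neg_atBot_atTop

lemma tendsto_rightAmplitude {k : ℝ} (hu : IsJostMinus c k u) :
    Tendsto (rightAmplitude k u) atBot (𝓝 0) := by
  have hdiff : Tendsto (fun x : ℝ ↦ 2 * Complex.I * k *
      (Complex.exp (Complex.I * k * x) * u x) - leftAmplitude k u x) atBot (𝓝 0) := by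
    simpa using (hu.2.const_mul (2 * Complex.I * k)).sub (hu.tendsto_leftAmplitude hq hM)
  refine squeeze_zero_norm (fun x ↦ le_of_eq ?_) (by simpa using hdiff.norm)
  have hexp : ‖Complex.exp (-(Complex.I * k * x))‖ = ‖Complex.exp (Complex.I * k * x)‖ := by
    simp [Complex.norm_exp]
  rw [rightAmplitude, norm_mul, hexp, ← norm_mul, leftAmplitude]
  ring_nf

end IsJostMinus

lemma rJost_zero (u : ℝ → ℂ) : rJost 0 u = 0 := by
  ext x
  simp [rJost, wJost]

lemma rJost_eq_div (hk0 : k ≠ 0) (hu0 : u x ≠ 0) :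
    rJost k u x
      = (Complex.I * k * u x - deriv u x) / (Complex.I * k * u x + deriv u x) := by
  have h0 : Complex.I * k * u x ≠ 0 := mul_ne_zero (mul_ne_zero Complex.I_ne_zero hk0) hu0
  rw [rJost, wJost, if_neg hk0, one_sub_div h0, one_add_div h0, div_div_div_cancel_right₀ h0]

lemma exp_mul_rJost_eq_div (hk0 : k ≠ 0) (hu0 : u x ≠ 0) :
    Complex.exp (2 * Complex.I * k * x) * rJost k u x
      = leftAmplitude k u x / rightAmplitude k u x := by
  have hexp : Complex.exp (2 * Complex.I * k * x)
      = Complex.exp (Complex.I * k * x) / Complex.exp (-(Complex.I * k * x)) := by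
    rw [← Complex.exp_sub]; ring_nf
  rw [rJost_eq_div hk0 hu0, leftAmplitude, rightAmplitude, mul_div_mul_comm, hexp]

namespace IsJostPlus

section Reflection

variable (hu : IsJostPlus c k u) (hq : LocallyIntegrable (qfun c))
  (hM : ∀ᵐ x, |qfun c x| ≤ M) (hk : 0 ≤ k.im) (hk0 : k ≠ 0)
include hu hq hM hk hk0

lemma norm_mul_sub_deriv_lt (x : ℝ) :
    ‖Complex.I * k * u x - deriv u x‖ < ‖Complex.I * k * u x + deriv u x‖ :=
  energyFlux_pos_iff.1 (hu.energyFlux_pos hq hM hk hk0 x)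

lemma apply_ne_zero (x : ℝ) : u x ≠ 0 := fun h ↦ by
  simpa [h] using hu.norm_mul_sub_deriv_lt hq hM hk hk0 x

lemma mul_add_deriv_ne_zero (x : ℝ) : Complex.I * k * u x + deriv u x ≠ 0 :=
  norm_pos_iff.1 ((norm_nonneg _).trans_lt (hu.norm_mul_sub_deriv_lt hq hM hk hk0 x))

theorem norm_rJost_lt_one (x : ℝ) : ‖rJost k u x‖ < 1 := by
  rw [rJost_eq_div hk0 (hu.apply_ne_zero hq hM hk hk0 x), norm_div,
    div_lt_one (norm_pos_iff.2 (hu.mul_add_deriv_ne_zero hq hM hk hk0 x))]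
  exact hu.norm_mul_sub_deriv_lt hq hM hk hk0 x

lemma rJost_eq : rJost k u
    = fun x ↦ (Complex.I * k * u x - deriv u x) / (Complex.I * k * u x + deriv u x) :=
  funext fun x ↦ rJost_eq_div hk0 (hu.apply_ne_zero hq hM hk hk0 x)

theorem ae_hasDerivAt_rJost : ∀ᵐ x : ℝ, HasDerivAt (rJost k u)
    (-(2 * Complex.I * k) * rJost k u x +
      (Complex.I * k * ((qfun c x : ℝ) : ℂ) / 2) * (1 + rJost k u x) ^ 2) x := by
  rw [hu.rJost_eq hq hM hk hk0]
  filter_upwards [hu.1.ae_hasDerivAt_deriv hq] with x hx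
  have hadd := hu.mul_add_deriv_ne_zero hq hM hk hk0 x
  have hiku := (hu.1.hasDerivAt x).const_mul (Complex.I * k)
  refine ((hiku.fun_sub hx).fun_div (hiku.fun_add hx) hadd).congr_deriv ?_
  rw [one_add_div hadd]
  field_simp
  linear_combination (4 * Complex.I * k ^ 2 * u x ^ 2 * (1 - qfun c x)) * Complex.I_sq

lemma absolutelyContinuousOnInterval_rJost (a b : ℝ) :
    AbsolutelyContinuousOnInterval (rJost k u) a b := by
  rw [hu.rJost_eq hq hM hk hk0]
  simp only [div_eq_mul_inv]
  refine absolutelyContinuousOnInterval_mul ?_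
    (absolutelyContinuousOnInterval_inv₀ (hu.1.absolutelyContinuousOnInterval_mul_add_deriv hq a b)
      fun x _ ↦ hu.mul_add_deriv_ne_zero hq hM hk hk0 x)
  exact (contDiff_const.mul hu.1.1).contDiffOn.absolutelyContinuousOnInterval.fun_sub
    (hu.1.absolutelyContinuousOnInterval_deriv hq a b)

theorem lipschitzWith_rJost : LipschitzWith (2 * ‖k‖ * (1 + M)).toNNReal (rJost k u) := by
  rw [← lipschitzOnWith_univ]
  refine lipschitzOnWith_of_ae_norm_deriv_le
    (hu.absolutelyContinuousOnInterval_rJost hq hM hk hk0)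
    (hu.ae_hasDerivAt_rJost hq hM hk hk0) ?_
  filter_upwards [hM] with x hxM _
  have hr := (hu.norm_rJost_lt_one hq hM hk hk0 x).le
  have hr2 : ‖1 + rJost k u x‖ ≤ 2 := by
    calc ‖1 + rJost k u x‖ ≤ ‖(1 : ℂ)‖ + ‖rJost k u x‖ := norm_add_le _ _
      _ ≤ 2 := by rw [norm_one]; linarith
  refine le_trans ?_ (Real.le_coe_toNNReal _)
  have hM0 : 0 ≤ M := (abs_nonneg _).trans hxM
  calc _ ≤ 2 * ‖k‖ * ‖rJost k u x‖ + ‖k‖ * |qfun c x| / 2 * ‖1 + rJost k u x‖ ^ 2 := by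
        refine (norm_add_le _ _).trans_eq ?_
        simp
    _ ≤ 2 * ‖k‖ * 1 + ‖k‖ * M / 2 * 2 ^ 2 := by gcongr
    _ = 2 * ‖k‖ * (1 + M) := by ring

theorem tendsto_rJost_atTop : Tendsto (rJost k u) atTop (𝓝 0) := by
  have h2k : 2 * Complex.I * k ≠ 0 := by simpa using hk0
  have hadd := hu.tendsto_rightAmplitude hq hM
  have h := ((hu.2.const_mul (2 * Complex.I * k)).sub hadd).div hadd h2k
  rw [mul_one, sub_self, zero_div] at h
  refine h.congr fun x ↦ ?_
  rw [rJost_eq_div hk0 (hu.apply_ne_zero hq hM hk hk0 x),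
    ← mul_div_mul_left _ _ (Complex.exp_ne_zero (-(Complex.I * k * x)))]
  simp only [Pi.div_apply, rightAmplitude]
  ring_nf

end Reflection

theorem tendsto_exp_mul_rJost_atBot {k : ℝ} (hu : IsJostPlus c k u)
    (hv : IsJostMinus c k v) (hq : LocallyIntegrable (qfun c)) (hM : ∀ᵐ x, |qfun c x| ≤ M)
    (hk0 : k ≠ 0) {α β : ℂ} (hβ : β ≠ 0)
    (huv : ∀ x, u x = α * v x + β * (starRingEnd ℂ) (v x)) :
    Tendsto (fun x : ℝ ↦ Complex.exp (2 * Complex.I * k * x) * rJost k u x) atBot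
      (𝓝 (α / β)) := by
  have hk0' : (k : ℂ) ≠ 0 := Complex.ofReal_ne_zero.2 hk0
  have h2k : 2 * Complex.I * k ≠ 0 := by simpa using hk0
  have hv' : Differentiable ℝ v := hv.1.1.differentiable one_ne_zero
  have hright := hv.tendsto_rightAmplitude hq hM
  have hleft := hv.tendsto_leftAmplitude hq hM
  have hstar : Differentiable ℝ fun x ↦ (starRingEnd ℂ) (v x) := hv'.star
  have huleft : Tendsto (leftAmplitude k u) atBot (𝓝 (α * (2 * Complex.I * k))) := by
    rw [funext huv, funext fun x ↦ leftAmplitude_mul_add_mul (k := k) (hv' x) (hstar x) α β]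
    simpa [leftAmplitude_conj] using (hleft.const_mul α).add (hright.star.neg.const_mul β)
  have huright : Tendsto (rightAmplitude k u) atBot (𝓝 (β * (2 * Complex.I * k))) := by
    rw [funext huv, funext fun x ↦ rightAmplitude_mul_add_mul (k := k) (hv' x) (hstar x) α β]
    simpa [rightAmplitude_conj] using (hright.const_mul α).add (hleft.star.neg.const_mul β)
  have h := huleft.div huright (mul_ne_zero hβ h2k)
  rw [mul_div_mul_right _ _ h2k] at h
  exact h.congr fun x ↦ (exp_mul_rJost_eq_div hk0'
    (hu.apply_ne_zero hq hM (by simp) hk0' x)).symm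

end IsJostPlus

theorem r_properties_general (c : ℝ → ℝ) (hmeas : AEMeasurable c)
    (hc : ∃ c₀ > (0 : ℝ), ∀ᵐ x : ℝ, c₀ ≤ |c x|) (k : ℂ) (hk : 0 ≤ k.im)
    (u₁ : ℝ → ℂ) (hu : IsJostPlus c k u₁) :
    (∀ x : ℝ, ‖rJost k u₁ x‖ < 1) ∧
    (∃ M : ℝ, ∀ x : ℝ, ‖rJost k u₁ x‖ ≤ M) ∧
    (∃ L : NNReal, LipschitzWith L (rJost k u₁)) ∧
    (∀ᵐ x : ℝ, HasDerivAt (rJost k u₁)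
      (-(2 * Complex.I * k) * rJost k u₁ x +
        (Complex.I * k * ((qfun c x : ℝ) : ℂ) / 2) * (1 + rJost k u₁ x) ^ 2) x) ∧
    Tendsto (rJost k u₁) atTop (𝓝 0) ∧
    (∀ kr : ℝ, k = (kr : ℂ) → kr ≠ 0 →
      ∀ (T R₂ : ℂ) (u₂ : ℝ → ℂ), T ≠ 0 → IsJostMinus c k u₂ →
        (∀ x : ℝ, u₁ x = (R₂ / T) * u₂ x + (1 / T) * (starRingEnd ℂ) (u₂ x)) →
        Tendsto (fun x : ℝ => Complex.exp (2 * Complex.I * k * (x : ℂ)) * rJost k u₁ x)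
          atBot (𝓝 R₂)) := by
  obtain ⟨c₀, hc₀, hc⟩ := hc
  have hM := hc.mono fun _ ↦ abs_qfun_le hc₀
  have hq := locallyIntegrable_qfun hmeas hM
  obtain rfl | hk0 := eq_or_ne k 0
  · rw [rJost_zero]
    exact ⟨by simp, ⟨0, by simp⟩, ⟨0, .const 0⟩,
      .of_forall fun x ↦ by simp, tendsto_const_nhds,
      fun _ hkr hkr0 ↦ absurd (Complex.ofReal_eq_zero.1 hkr.symm) hkr0⟩
  · have hr := hu.norm_rJost_lt_one hq hM hk hk0
    refine ⟨hr, ⟨1, fun x ↦ (hr x).le⟩, ⟨_, hu.lipschitzWith_rJost hq hM hk hk0⟩,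
      hu.ae_hasDerivAt_rJost hq hM hk hk0, hu.tendsto_rJost_atTop hq hM hk hk0, ?_⟩
    rintro kr rfl hkr0 T R₂ u₂ hT hu₂ hscat
    simpa [hT] using
      hu.tendsto_exp_mul_rJost_atBot hu₂ hq hM hkr0 (one_div_ne_zero hT) hscat

end Helmholtz

/-- Basic properties of `r(·,k)`. -/
theorem r_properties (c : ℝ → ℝ) (hmeas : Measurable c)
    (h1 : HypH1 c) (h2 : HypH2 c) (k : ℂ) (hk : 0 ≤ k.im)
    (u₁ : ℝ → ℂ) (hu : IsJostPlus c k u₁) :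
    (∀ x : ℝ, ‖rJost k u₁ x‖ < 1) ∧
    (∃ M : ℝ, ∀ x : ℝ, ‖rJost k u₁ x‖ ≤ M) ∧
    (∃ L : NNReal, LipschitzWith L (rJost k u₁)) ∧
    (∀ᵐ x : ℝ, HasDerivAt (rJost k u₁)
      (-(2 * Complex.I * k) * rJost k u₁ x +
        (Complex.I * k * ((qfun c x : ℝ) : ℂ) / 2) * (1 + rJost k u₁ x) ^ 2) x) ∧
    Tendsto (rJost k u₁) atTop (𝓝 0) ∧
    (∀ kr : ℝ, k = (kr : ℂ) → kr ≠ 0 →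
      ∀ (T R₂ : ℂ) (u₂ : ℝ → ℂ), T ≠ 0 → IsJostMinus c k u₂ →
        (∀ x : ℝ, u₁ x = (R₂ / T) * u₂ x + (1 / T) * (starRingEnd ℂ) (u₂ x)) →
        Tendsto (fun x : ℝ => Complex.exp (2 * Complex.I * k * (x : ℂ)) * rJost k u₁ x)
          atBot (𝓝 R₂)) := by
  obtain ⟨c₀, hc₀, _, _, hc⟩ := h1
  exact r_properties_general c hmeas.aemeasurable
    ⟨c₀, hc₀, hc.mono fun x hx ↦ hx.1.le.trans (le_abs_self (c x))⟩ k hk u₁ hu
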